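/- arXiv:1002.3938 — 7 statements merged into one kernel-verified Lean document; each statement's English description precedes it below -/
import Mathlib

section
/- Let n ≥ 1 and r ≥ 1 be integers and let x, y ∈ [0,∞)^n. If F_{k,r}(x) ≤ F_{k,r}(y) for every integer k with r ≤ k ≤ n·r, then the geometric means satisfy (∏_{i=1}^n x_i)^{1/n} ≤ (∏_{i=1}^n y_i)^{1/n}. -/
open Finset MeasureTheory

/-- `F n r k x`: the sum over all n-tuples κ of nonnegative integers with `∑ i, κ i = k`
and `max_i κ i ≤ r` of `∏ i, x i ^ κ i / (κ i)!`. -/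
noncomputable def F (n r k : ℕ) (x : Fin n → ℝ) : ℝ :=
  ∑ κ ∈ Finset.univ.filter (fun κ : Fin n → Fin (r + 1) => ∑ i, (κ i : ℕ) = k),
    ∏ i, x i ^ (κ i : ℕ) / (Nat.factorial (κ i : ℕ))

theorem F_top (n r : ℕ) (x : Fin n → ℝ) :
    F n r (n * r) x = (∏ i, x i) ^ r / (Nat.factorial r : ℝ) ^ n := by
  have h : (Finset.univ.filter (fun κ : Fin n → Fin (r + 1) => ∑ i, (κ i : ℕ) = n * r))
      = {fun _ => Fin.last r} := by
    ext κ
    simp only [Finset.mem_filter, Finset.mem_univ, true_and, Finset.mem_singleton]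
    constructor
    · intro hs
      have hle : ∀ i ∈ (Finset.univ : Finset (Fin n)), (κ i : ℕ) ≤ r :=
        fun i _ => Nat.lt_succ_iff.mp (κ i).isLt
      have hs' : ∑ i, (κ i : ℕ) = ∑ _i : Fin n, r := by simp [hs]
      have := (Finset.sum_eq_sum_iff_of_le hle).mp hs'
      funext i
      exact Fin.ext (by simpa using this i (Finset.mem_univ i))
    · rintro rfl
      simp
  unfold F
  rw [h, Finset.sum_singleton]
  simp [Finset.prod_div_distrib, Finset.prod_pow]

theorem stmt1 (n r : ℕ) (hn : 1 ≤ n) (hr : 1 ≤ r) (x y : Fin n → ℝ)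
    (hx : ∀ i, 0 ≤ x i) (hy : ∀ i, 0 ≤ y i)
    (hF : ∀ k : ℕ, r ≤ k → k ≤ n * r → F n r k x ≤ F n r k y) :
    (∏ i, x i) ^ ((1 : ℝ) / n) ≤ (∏ i, y i) ^ ((1 : ℝ) / n) := by
  have h := hF (n * r) (Nat.le_mul_of_pos_left r hn) le_rfl
  rw [F_top, F_top] at h
  have hpos : (0 : ℝ) < (Nat.factorial r : ℝ) ^ n := by positivity
  have h2 := (div_le_div_iff_of_pos_right hpos).mp h
  have h3 : ∏ i, x i ≤ ∏ i, y i :=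
    le_of_pow_le_pow_left₀ (by omega) (Finset.prod_nonneg fun i _ => hy i) h2
  exact Real.rpow_le_rpow (Finset.prod_nonneg fun i _ => hx i) h3 (by positivity)
end

section
/- Let r ≥ 1 be an integer, let p be a real number with 1 < p < r+1, and let a ≥ 0. Then ∫_0^∞ (at − log(1 + at + (at)^2/2! + ⋯ + (at)^r/r!)) · t^{-p-1} dt = a^p · J_r(p), where J_r(p) := ∫_0^∞ (s − log(1 + s + ⋯ + s^r/r!)) · s^{-p-1} ds is finite and positive. -/
open Finset MeasureTheory

/-- `P r s = 1 + s + s^2/2! + ... + s^r/r!`, the `r`-th Taylor polynomial of `exp`. -/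
noncomputable def P (r : ℕ) (s : ℝ) : ℝ := ∑ j ∈ Finset.range (r + 1), s ^ j / (Nat.factorial j)

lemma aux_one_le (r : ℕ) {s : ℝ} (hs : 0 ≤ s) : 1 ≤ P r s := by
  unfold P
  rw [Finset.sum_range_succ']
  have : 0 ≤ ∑ k ∈ Finset.range r, s ^ (k + 1) / ((Nat.factorial (k + 1) : ℕ) : ℝ) :=
    Finset.sum_nonneg fun i _ => by positivity
  simpa using this

lemma aux_lt_exp (r : ℕ) {s : ℝ} (hs : 0 < s) : P r s < Real.exp s := by
  have h := Real.sum_le_exp_of_nonneg hs.le (r + 2)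
  rw [Finset.sum_range_succ] at h
  have : 0 < s ^ (r + 1) / ((Nat.factorial (r + 1) : ℕ) : ℝ) := by positivity
  unfold P
  linarith

lemma aux_pos (r : ℕ) {s : ℝ} (hs : 0 < s) : 0 < s - Real.log (P r s) := by
  have h1 := aux_one_le r hs.le
  have := (Real.log_lt_iff_lt_exp (by linarith)).2 (aux_lt_exp r hs)
  linarith

lemma aux_le (r : ℕ) {s : ℝ} (hs : 0 < s) : s - Real.log (P r s) ≤ s := by
  have := Real.log_nonneg (aux_one_le r hs.le)
  linarith

lemma aux_small (r : ℕ) : ∃ C : ℝ, ∀ s : ℝ, 0 < s → s ≤ 1 →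
    s - Real.log (P r s) ≤ C * s ^ (r + 1) := by
  refine ⟨(((r + 1).succ : ℕ) : ℝ) / ((Nat.factorial (r + 1) : ℕ) * ((r + 1 : ℕ) : ℝ)), ?_⟩
  intro s hs hs1
  have h1 := aux_one_le r hs.le
  have hb := Real.exp_bound (x := s) (by rw [abs_of_pos hs]; exact hs1) (Nat.succ_pos r)
  rw [abs_of_pos hs] at hb
  have hb := (le_abs_self _).trans hb
  have hl := Real.log_le_sub_one_of_pos (x := Real.exp s / P r s) (by positivity)
  rw [Real.log_div (Real.exp_pos s).ne' (by positivity), Real.log_exp] at hl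
  have h2 : Real.exp s / P r s - 1 ≤ Real.exp s - P r s := by
    have h3 := aux_lt_exp r hs
    rw [div_sub_one (by positivity), div_le_iff₀ (by positivity)]
    nlinarith
  rw [mul_comm]
  exact (hl.trans h2).trans hb

theorem stmt7 (r : ℕ) (hr : 1 ≤ r) (p : ℝ) (hp1 : 1 < p) (hpr : p < r + 1)
    (a : ℝ) (ha : 0 ≤ a) :
    IntegrableOn (fun s : ℝ => (s - Real.log (P r s)) * s ^ (-p - 1)) (Set.Ioi 0) volume ∧
    0 < ∫ s in Set.Ioi (0 : ℝ), (s - Real.log (P r s)) * s ^ (-p - 1) ∧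
    ∫ t in Set.Ioi (0 : ℝ), (a * t - Real.log (P r (a * t))) * t ^ (-p - 1)
      = a ^ p * ∫ s in Set.Ioi (0 : ℝ), (s - Real.log (P r s)) * s ^ (-p - 1) := by
  have hmeas : Measurable (fun s : ℝ => (s - Real.log (P r s)) * s ^ (-p - 1)) := by
    have : Measurable (P r) := by unfold P; fun_prop
    fun_prop
  have hpos : ∀ s : ℝ, 0 < s → 0 < (s - Real.log (P r s)) * s ^ (-p - 1) := fun s hs =>
    mul_pos (aux_pos r hs) (Real.rpow_pos_of_pos hs _)
  have hint : IntegrableOn (fun s : ℝ => (s - Real.log (P r s)) * s ^ (-p - 1))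
      (Set.Ioi 0) volume := by
    rw [← Set.Ioc_union_Ioi_eq_Ioi (zero_le_one : (0 : ℝ) ≤ 1)]
    refine IntegrableOn.union ?_ ?_
    · obtain ⟨C, hC⟩ := aux_small r
      have h0 : IntegrableOn (fun s : ℝ => s ^ ((r : ℝ) - p)) (Set.Ioc 0 1) volume :=
        (intervalIntegrable_iff_integrableOn_Ioc_of_le zero_le_one).1
          (intervalIntegral.intervalIntegrable_rpow' (by linarith))
      refine Integrable.mono' (h0.const_mul C) hmeas.aestronglyMeasurable ?_
      refine ae_restrict_of_forall_mem measurableSet_Ioc fun s hs => ?_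
      rw [Real.norm_of_nonneg (hpos s hs.1).le]
      have h2 : s ^ ((r : ℝ) - p) = s ^ (r + 1) * s ^ (-p - 1) := by
        rw [← Real.rpow_natCast, ← Real.rpow_add hs.1]
        congr 1; push_cast; ring
      rw [h2, ← mul_assoc]
      exact mul_le_mul_of_nonneg_right (hC s hs.1 hs.2) (Real.rpow_nonneg hs.1.le _)
    · have h0 : IntegrableOn (fun s : ℝ => s ^ (-p)) (Set.Ioi 1) volume :=
        integrableOn_Ioi_rpow_of_lt (by linarith) one_pos
      refine Integrable.mono' h0 hmeas.aestronglyMeasurable ?_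
      refine ae_restrict_of_forall_mem measurableSet_Ioi fun s hs => ?_
      have hs0 : (0 : ℝ) < s := one_pos.trans hs
      rw [Real.norm_of_nonneg (hpos s hs0).le]
      have h2 : s ^ (-p) = s * s ^ (-p - 1) := by
        rw [← Real.rpow_one_add' hs0.le (by linarith)]
        congr 1; ring
      rw [h2]
      exact mul_le_mul_of_nonneg_right (aux_le r hs0) (Real.rpow_nonneg hs0.le _)
  refine ⟨hint, ?_, ?_⟩
  · rw [setIntegral_pos_iff_support_of_nonneg_ae
      (ae_restrict_of_forall_mem measurableSet_Ioi fun s hs => (hpos s hs).le) hint]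
    have hsub : Set.Ioi (0 : ℝ) ⊆
        Function.support (fun s : ℝ => (s - Real.log (P r s)) * s ^ (-p - 1)) :=
      fun s hs => (hpos s hs).ne'
    rw [Set.inter_eq_self_of_subset_right hsub]
    simp
  · rcases ha.eq_or_lt with rfl | ha
    · have hP : P r 0 = 1 := by
        unfold P
        rw [Finset.sum_range_succ']
        simp
      simp [hP, Real.zero_rpow (by linarith : p ≠ 0)]
    · have h := integral_comp_mul_left_Ioi
        (fun s : ℝ => (s - Real.log (P r s)) * s ^ (-p - 1)) 0 ha
      rw [mul_zero, smul_eq_mul] at h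
      have h3 : a ^ p * a⁻¹⁻¹ * a ^ (-p - 1) = 1 := by
        rw [inv_inv, ← Real.rpow_add_one ha.ne', ← Real.rpow_add ha]
        ring_nf; simp
      have h4 : (∫ s in Set.Ioi (0 : ℝ), (s - Real.log (P r s)) * s ^ (-p - 1))
          = a⁻¹⁻¹ * ∫ x in Set.Ioi (0 : ℝ),
            (a * x - Real.log (P r (a * x))) * (a * x) ^ (-p - 1) := by
        rw [h, ← mul_assoc, inv_mul_cancel₀ (inv_ne_zero ha.ne'), one_mul]
      rw [h4, ← mul_assoc, ← integral_const_mul]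
      refine setIntegral_congr_fun measurableSet_Ioi fun t ht => ?_
      rw [Real.mul_rpow ha.le (le_of_lt ht)]
      linear_combination (-(a * t - Real.log (P r (a * t))) * t ^ (-p - 1)) * h3
end

section
/- (Proschan–Sethuraman) Let k, n ≥ 1 be integers, let I_k be the set of n-tuples p = (p_1,…,p_n) of nonnegative integers with ∑_i p_i = k, and let S ⊆ I_k be a Schur-concave index set, i.e. whenever p ∈ S, q ∈ I_k, and p majorizes q, then q ∈ S. Define H_S(x_1,…,x_n) = ∑_{p ∈ S} ∏_{i=1}^n x_i^{p_i}/p_i!. Then H_S is Schur-concave on [0,∞)^n: whenever x, y ∈ [0,∞)^n and x majorizes y, one has H_S(x) ≤ H_S(y). -/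
open Finset MeasureTheory

/-- The sum of the `m` largest entries of `x`, i.e. the largest sum of `m` entries. -/
noncomputable def sMax (n m : ℕ) (x : Fin n → ℝ) : ℝ :=
  sSup {s : ℝ | ∃ A : Finset (Fin n), A.card = m ∧ s = ∑ i ∈ A, x i}

/-- `x` majorizes `y`: equal total sums, and for each `1 ≤ m ≤ n-1` the sum of the
`m` largest entries of `x` is at least that of `y`. -/
def Majorizes (n : ℕ) (x y : Fin n → ℝ) : Prop :=
  (∑ i, x i = ∑ i, y i) ∧ ∀ m : ℕ, 1 ≤ m → m ≤ n - 1 → sMax n m y ≤ sMax n m x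

/-- The sum of the `m` largest entries of a tuple of nonnegative integers. -/
def sMaxNat (n m : ℕ) (p : Fin n → ℕ) : ℕ :=
  Finset.sup (Finset.powersetCard m (Finset.univ : Finset (Fin n))) (fun A => ∑ i ∈ A, p i)

/-- Majorization for tuples of nonnegative integers. -/
def MajorizesNat (n : ℕ) (p q : Fin n → ℕ) : Prop :=
  (∑ i, p i = ∑ i, q i) ∧ ∀ m : ℕ, 1 ≤ m → m ≤ n - 1 → sMaxNat n m q ≤ sMaxNat n m p

noncomputable def ee (l : ℕ) (z : ℝ) : ℝ := z ^ l / (Nat.factorial l)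

lemma ee_nonneg (l : ℕ) {z : ℝ} (hz : 0 ≤ z) : 0 ≤ ee l z := by unfold ee; positivity

lemma ee_deriv (l : ℕ) (z : ℝ) : HasDerivAt (ee (l+1)) (ee l z) z := by
  have h := (hasDerivAt_pow (l+1) z).div_const ((Nat.factorial (l+1) : ℕ) : ℝ)
  refine HasDerivAt.congr_deriv (f := ee (l+1)) h ?_
  unfold ee
  rw [Nat.factorial_succ]
  have : (Nat.factorial l : ℝ) ≠ 0 := by positivity
  push_cast
  field_simp

lemma ee_cross (a d : ℕ) {u v : ℝ} (hv : 0 ≤ v) (huv : v ≤ u) :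
    ee a u * ee (a+d) v ≤ ee (a+d) u * ee a v := by
  unfold ee
  rw [div_mul_div_comm, div_mul_div_comm, mul_comm ((Nat.factorial (a+d) : ℕ) : ℝ)]
  have h : u ^ a * v ^ (a+d) ≤ u ^ (a+d) * v ^ a := by
    have h1 : v ^ d ≤ u ^ d := pow_le_pow_left₀ hv huv d
    have h2 : 0 ≤ u ^ a * v ^ a := by have := hv.trans huv; positivity
    calc _ = (u ^ a * v ^ a) * v ^ d := by ring
      _ ≤ (u ^ a * v ^ a) * u ^ d := by gcongr
      _ = _ := by ring
  gcongr

lemma deriv_tele (a m N : ℕ) (hN : a + N ≤ m) (c t : ℝ) :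
    HasDerivAt (fun t => ∑ s ∈ Finset.range N, ee (a+s+1) (c+t) * ee (m-(a+s)) (c-t))
      (ee a (c+t) * ee (m-a) (c-t) - ee (a+N) (c+t) * ee (m-(a+N)) (c-t)) t := by
  induction N with
  | zero => simpa using hasDerivAt_const t (0:ℝ)
  | succ N ih =>
    simp only [Finset.sum_range_succ]
    have ih := ih (by omega)
    obtain ⟨r, hr⟩ : ∃ r, m - (a+N) = r + 1 := ⟨m - (a+N) - 1, by omega⟩
    have hr2 : m - (a + (N+1)) = r := by omega
    rw [hr2]
    rw [hr] at ih ⊢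
    have h1 : HasDerivAt (fun t => ee (a+N+1) (c+t)) (ee (a+N) (c+t)) t := by
      exact HasDerivAt.congr_deriv ((ee_deriv (a+N) (c+t)).comp t ((hasDerivAt_id t).const_add c)) (by simp)
    have h2 : HasDerivAt (fun t => ee (r+1) (c-t)) (-ee r (c-t)) t := by
      exact HasDerivAt.congr_deriv ((ee_deriv r (c-t)).comp t ((hasDerivAt_id t).const_sub c)) (by simp)
    refine HasDerivAt.congr_deriv (ih.add (h1.mul h2)) ?_
    rw [show a + (N+1) = a+N+1 by ring]
    ring

lemma two_var_pos (a N : ℕ) {c t t' : ℝ} (h0 : 0 ≤ t') (h1 : t' ≤ t) (h2 : t ≤ c) :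
    ∑ s ∈ Finset.range N, ee (a+s+1) (c+t) * ee (a+a+N-(a+s)) (c-t) ≤
    ∑ s ∈ Finset.range N, ee (a+s+1) (c+t') * ee (a+a+N-(a+s)) (c-t') := by
  have key : AntitoneOn (fun t => ∑ s ∈ Finset.range N, ee (a+s+1) (c+t) * ee (a+a+N-(a+s)) (c-t)) (Set.Icc 0 c) := by
    apply antitoneOn_of_deriv_nonpos (convex_Icc 0 c)
    · intro z _
      exact (deriv_tele a (a+a+N) N (by omega) c z).continuousAt.continuousWithinAt
    · intro z _
      exact (deriv_tele a (a+a+N) N (by omega) c z).differentiableAt.differentiableWithinAt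
    · intro z hz
      rw [interior_Icc] at hz
      rw [(deriv_tele a (a+a+N) N (by omega) c z).deriv]
      rw [show a+a+N-a = a+N by omega, show a+a+N-(a+N) = a by omega]
      have := ee_cross a N (u := c+z) (v := c-z) (by linarith [hz.2]) (by linarith [hz.1])
      linarith
  exact key ⟨h0, h1.trans h2⟩ ⟨h0.trans h1, h2⟩ h1

lemma two_var_zero (m : ℕ) (u v : ℝ) :
    ∑ l ∈ Finset.range (m+1), ee l u * ee (m-l) v = ee m (u+v) := by
  unfold ee
  rw [add_pow, Finset.sum_div]
  apply Finset.sum_congr rfl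
  intro l hl
  have hl : l ≤ m := by simpa [Nat.lt_succ_iff] using hl
  rw [Nat.cast_choose ℝ hl]
  have := Nat.factorial_pos
  field_simp

lemma two_var (m : ℕ) (T : Finset ℕ) (hT : ∀ l ∈ T, l ≤ m)
    (hc : ∀ l ∈ T, ∀ l', l' ≤ m → l' ≤ max l (m-l) → m - l' ≤ max l (m-l) → l' ∈ T)
    {u v u' v' : ℝ} (hs : u + v = u' + v') (hv : 0 ≤ v) (h1 : v' ≤ u') (h2 : u' ≤ u) :
    ∑ l ∈ T, ee l u * ee (m-l) v ≤ ∑ l ∈ T, ee l u' * ee (m-l) v' := by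
  rcases T.eq_empty_or_nonempty with rfl | hne
  · simp
  obtain ⟨a, ha, hmin⟩ : ∃ a ∈ T, ∀ l ∈ T, a ≤ l := ⟨T.min' hne, T.min'_mem hne, fun l hl => T.min'_le l hl⟩
  have ham := hT a ha
  have hma : m - a ∈ T := hc a ha _ (by omega) (by omega) (by omega)
  have h3 := hmin _ hma
  have hTe : T = Finset.Ico a (m - a + 1) := by
    ext l
    rw [Finset.mem_Ico]
    constructor
    · intro hl
      have hlm := hT l hl
      have := hmin _ hl
      have := hmin _ (hc l hl (m-l) (by omega) (by omega) (by omega))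
      omega
    · rintro ⟨h4, h5⟩
      exact hc a ha l (by omega) (by omega) (by omega)
  subst hTe
  rcases Nat.eq_zero_or_pos a with rfl | hpos
  · simp only [Nat.sub_zero, ← Finset.range_eq_Ico, two_var_zero, hs]; rfl
  · obtain ⟨b, rfl⟩ : ∃ b, a = b + 1 := ⟨a - 1, by omega⟩
    obtain ⟨N, hN⟩ : ∃ N, m = b + b + N + 1 := ⟨m - (b+b+1), by omega⟩
    have := two_var_pos b N (c := (u+v)/2) (t := (u-v)/2) (t' := (u'-v')/2) (by linarith) (by linarith) (by linarith)
    rw [Finset.sum_Ico_eq_sum_range, Finset.sum_Ico_eq_sum_range]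
    rw [show m - (b+1) + 1 - (b+1) = N by omega]
    rw [show (u+v)/2 + (u-v)/2 = u by ring, show (u+v)/2 - (u-v)/2 = v by ring, hs, show (u'+v')/2 + (u'-v')/2 = u' by ring, show (u'+v')/2 - (u'-v')/2 = v' by ring] at this
    convert this using 4 with s _ s _ <;> first | (congr 1; omega) | omega

lemma sMaxNat_le_of {n m : ℕ} {p q : Fin n → ℕ}
    (h : ∀ A : Finset (Fin n), ∃ B : Finset (Fin n), B.card = A.card ∧ ∑ i ∈ A, q i ≤ ∑ i ∈ B, p i) :
    sMaxNat n m q ≤ sMaxNat n m p := by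
  unfold sMaxNat
  apply Finset.sup_le
  intro A hA
  obtain ⟨B, hB, hle⟩ := h A
  refine hle.trans ?_
  exact Finset.le_sup (f := fun A => ∑ i ∈ A, p i) (by
    rw [Finset.mem_powersetCard] at hA ⊢
    exact ⟨Finset.subset_univ _, hB.trans hA.2⟩)

lemma maj_perm {n : ℕ} (p : Fin n → ℕ) (σ : Equiv.Perm (Fin n)) : MajorizesNat n p (p ∘ σ) := by
  refine ⟨(Equiv.sum_comp σ p).symm, fun m _ _ => sMaxNat_le_of fun A => ⟨A.map σ.toEmbedding, by simp, by simp⟩⟩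

lemma maj_aux {n : ℕ} {p q : Fin n → ℕ} {i j : Fin n} (_hij : i ≠ j)
    (ho : ∀ r, r ≠ i → r ≠ j → q r = p r)
    (hi : q i ≤ max (p i) (p j)) (A : Finset (Fin n)) (hiA : i ∈ A) (hjA : j ∉ A) :
    ∃ B : Finset (Fin n), B.card = A.card ∧ ∑ i ∈ A, q i ≤ ∑ i ∈ B, p i := by
  have e : ∑ r ∈ A.erase i, q r = ∑ r ∈ A.erase i, p r := by
    apply Finset.sum_congr rfl
    intro r hr
    rw [Finset.mem_erase] at hr
    exact ho r hr.1 (fun h => hjA (h ▸ hr.2))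
  have e1 := Finset.add_sum_erase A q hiA
  have e2 := Finset.add_sum_erase A p hiA
  rcases le_max_iff.1 hi with h | h
  · exact ⟨A, rfl, by omega⟩
  · have hj' : j ∉ A.erase i := fun h => hjA (Finset.mem_of_mem_erase h)
    refine ⟨insert j (A.erase i), ?_, ?_⟩
    · rw [Finset.card_insert_of_notMem hj', Finset.card_erase_add_one hiA]
    · rw [Finset.sum_insert hj']; omega

lemma sum_pair {n : ℕ} {M : Type*} [AddCommMonoid M] {p q : Fin n → M} {i j : Fin n} (hij : i ≠ j)
    (ho : ∀ r, r ≠ i → r ≠ j → q r = p r) (hs : q i + q j = p i + p j)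
    (A : Finset (Fin n)) (hiA : i ∈ A) (hjA : j ∈ A) : ∑ r ∈ A, q r = ∑ r ∈ A, p r := by
  have hj : j ∈ A.erase i := Finset.mem_erase.2 ⟨hij.symm, hjA⟩
  rw [← Finset.add_sum_erase A q hiA, ← Finset.add_sum_erase A p hiA, ← Finset.add_sum_erase _ q hj,
    ← Finset.add_sum_erase _ p hj, ← add_assoc, ← add_assoc, hs]
  congr 1
  apply Finset.sum_congr rfl
  intro r hr
  simp only [Finset.mem_erase] at hr
  exact ho r hr.2.1 hr.1

lemma maj_transfer {n : ℕ} {p q : Fin n → ℕ} {i j : Fin n} (hij : i ≠ j)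
    (ho : ∀ r, r ≠ i → r ≠ j → q r = p r) (hs : q i + q j = p i + p j)
    (hi : q i ≤ max (p i) (p j)) (hj : q j ≤ max (p i) (p j)) : MajorizesNat n p q := by
  refine ⟨(sum_pair hij ho hs _ (Finset.mem_univ _) (Finset.mem_univ _)).symm, fun m _ _ => sMaxNat_le_of fun A => ?_⟩
  by_cases hiA : i ∈ A <;> by_cases hjA : j ∈ A
  · exact ⟨A, rfl, (sum_pair hij ho hs A hiA hjA).le⟩
  · exact maj_aux hij ho hi A hiA hjA
  · exact maj_aux hij.symm (fun r h h' => ho r h' h) (by rwa [max_comm]) A hjA hiA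
  · exact ⟨A, rfl, (Finset.sum_congr rfl fun r hr => ho r (fun h => hiA (h ▸ hr)) (fun h => hjA (h ▸ hr))).le⟩

noncomputable def HH {n : ℕ} (S : Finset (Fin n → ℕ)) (x : Fin n → ℝ) : ℝ := ∑ p ∈ S, ∏ i, ee (p i) (x i)

lemma HH_perm {n : ℕ} (S : Finset (Fin n → ℕ))
    (hS : ∀ p ∈ S, ∀ q, MajorizesNat n p q → q ∈ S) (x : Fin n → ℝ) (σ : Equiv.Perm (Fin n)) :
    HH S (x ∘ σ) = HH S x := by
  unfold HH
  refine Finset.sum_nbij' (fun p => p ∘ σ.symm) (fun p => p ∘ σ) ?_ ?_ ?_ ?_ ?_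
  · intro p hp; exact hS p hp _ (maj_perm p _)
  · intro p hp; exact hS p hp _ (maj_perm p _)
  · intro p _; ext; simp
  · intro p _; ext; simp
  · intro p _
    rw [← Equiv.prod_comp σ (fun i => ee ((p ∘ σ.symm) i) (x i))]
    simp

lemma HH_transfer {n : ℕ} (S : Finset (Fin n → ℕ))
    (hS : ∀ p ∈ S, ∀ q, MajorizesNat n p q → q ∈ S) {x y : Fin n → ℝ} {i j : Fin n} (hij : i ≠ j)
    (ho : ∀ r, r ≠ i → r ≠ j → y r = x r) (hs : x i + x j = y i + y j)
    (h0 : 0 ≤ x j) (hx : ∀ r, 0 ≤ x r) (h1 : y j ≤ y i) (h2 : y i ≤ x i) : HH S x ≤ HH S y := by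
  classical
  unfold HH
  let φ : (Fin n → ℕ) → (Fin n → ℕ) := fun p => Function.update (Function.update p i 0) j (p i + p j)
  rw [← Finset.sum_fiberwise_of_maps_to (s := S) (t := S.image φ) (g := φ) (fun p hp => Finset.mem_image_of_mem _ hp),
    ← Finset.sum_fiberwise_of_maps_to (s := S) (t := S.image φ) (g := φ) (fun p hp => Finset.mem_image_of_mem _ hp)]
  apply Finset.sum_le_sum
  intro r hr
  obtain ⟨p0, hp0, rfl⟩ := Finset.mem_image.1 hr
  set m := p0 i + p0 j with hm
  let up : ℕ → (Fin n → ℕ) := fun l => Function.update (Function.update p0 i l) j (m - l)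
  have upi : ∀ l, up l i = l := fun l => by simp [up, hij]
  have upj : ∀ l, up l j = m - l := fun l => by simp [up]
  have upo : ∀ l r, r ≠ i → r ≠ j → up l r = p0 r := fun l r h h' => by simp [up, h, h']
  let T := (Finset.range (m+1)).filter (fun l => up l ∈ S)
  let E := (Finset.univ.erase i).erase j
  have hjE : j ∈ Finset.univ.erase i := by simp [hij.symm]
  have key : ∀ z : Fin n → ℝ, ∑ p ∈ S with φ p = φ p0, ∏ r, ee (p r) (z r)
      = (∏ r ∈ E, ee (p0 r) (z r)) * ∑ l ∈ T, ee l (z i) * ee (m-l) (z j) := by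
    intro z
    rw [Finset.mul_sum]
    have fib : ∀ p, φ p = φ p0 → p i + p j = m ∧ ∀ r, r ≠ i → r ≠ j → p r = p0 r := by
      intro p hp
      constructor
      · have := congrFun hp j
        simpa [φ] using this
      · intro r h h'
        have := congrFun hp r
        simpa [φ, h, h'] using this
    have upp : ∀ p, φ p = φ p0 → up (p i) = p := by
      intro p hp
      obtain ⟨f1, f2⟩ := fib p hp
      ext r
      by_cases h : r = i
      · subst h; exact upi _
      by_cases h' : r = j
      · subst h'; rw [upj]; omega
      rw [upo _ _ h h', f2 r h h']
    refine Finset.sum_nbij' (fun p => p i) up ?_ ?_ ?_ ?_ ?_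
    · intro p hp
      obtain ⟨hp, hφ⟩ := Finset.mem_filter.1 hp
      have := (fib p hφ).1
      refine Finset.mem_filter.2 ⟨Finset.mem_range.2 (by omega), ?_⟩
      rw [upp p hφ]; exact hp
    · intro l hl
      obtain ⟨hl, hu⟩ := Finset.mem_filter.1 hl
      rw [Finset.mem_range] at hl
      refine Finset.mem_filter.2 ⟨hu, ?_⟩
      ext r
      by_cases h' : r = j
      · subst h'; simp only [φ, Function.update_self, upi, upj]; omega
      by_cases h : r = i
      · subst h; simp [φ, h']
      simp [φ, h, h', upo]
    · intro p hp
      exact upp p (Finset.mem_filter.1 hp).2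
    · intro l _; exact upi l
    · intro p hp
      obtain ⟨hp, hφ⟩ := Finset.mem_filter.1 hp
      obtain ⟨f1, f2⟩ := fib p hφ
      rw [← Finset.mul_prod_erase _ _ (Finset.mem_univ i), ← Finset.mul_prod_erase _ _ hjE]
      have : ∏ r ∈ E, ee (p0 r) (z r) = ∏ r ∈ (Finset.univ.erase i).erase j, ee (p r) (z r) := by
        apply Finset.prod_congr rfl
        intro r hr
        simp only [E, Finset.mem_erase] at hr
        rw [f2 r hr.2.1 hr.1]
      rw [this, show m - p i = p j by omega]
      ring
  rw [key x, key y]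
  have : ∏ r ∈ E, ee (p0 r) (y r) = ∏ r ∈ E, ee (p0 r) (x r) := by
    apply Finset.prod_congr rfl
    intro r hr
    simp only [E, Finset.mem_erase] at hr
    rw [ho r hr.2.1 hr.1]
  rw [this]
  refine mul_le_mul_of_nonneg_left ?_ (Finset.prod_nonneg fun r _ => ee_nonneg _ (hx r))
  apply two_var m T _ _ hs h0 h1 h2
  · intro l hl
    have := (Finset.mem_filter.1 hl).1
    rw [Finset.mem_range] at this; omega
  · intro l hl l' hl' ha hb
    obtain ⟨hl, hu⟩ := Finset.mem_filter.1 hl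
    rw [Finset.mem_range] at hl
    refine Finset.mem_filter.2 ⟨Finset.mem_range.2 (by omega), hS _ hu _ (maj_transfer hij ?_ ?_ ?_ ?_)⟩
    · intro r h h'; rw [upo _ _ h h', upo _ _ h h']
    · rw [upi, upi, upj, upj]; omega
    · rw [upi, upi, upj]; exact ha
    · rw [upi, upj, upj]; exact hb

lemma chain {n : ℕ} (S : Finset (Fin n → ℕ))
    (hS : ∀ p ∈ S, ∀ q, MajorizesNat n p q → q ∈ S) {y : Fin n → ℝ} (hy : ∀ i, 0 ≤ y i)
    (hya : Antitone y) (N : ℕ) : ∀ (x : Fin n → ℝ), (∀ i, 0 ≤ x i) → (∑ i, x i = ∑ i, y i) →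
    (∀ j, ∑ i ∈ Finset.Iic j, y i ≤ ∑ i ∈ Finset.Iic j, x i) →
    (Finset.univ.filter (fun i => x i ≠ y i)).card ≤ N → HH S x ≤ HH S y := by
  induction N with
  | zero =>
    intro x _ _ _ hc
    have : x = y := by
      ext i
      have h := Finset.card_eq_zero.1 (Nat.le_zero.1 hc)
      by_contra hne
      have : i ∈ (Finset.univ.filter (fun i => x i ≠ y i)) := by simp [hne]
      rw [h] at this; simp at this
    rw [this]
  | succ N ih =>
    intro x hx hsum hpre hc
    by_cases hle : ∀ i, y i ≤ x i
    · have : x = y := by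
        ext i
        have := (Finset.sum_eq_sum_iff_of_le (s := Finset.univ) (fun i _ => hle i)).1 hsum.symm i (Finset.mem_univ i)
        exact this.symm
      rw [this]
    · push Not at hle
      obtain ⟨j, hj, hmin⟩ : ∃ j, x j < y j ∧ ∀ i < j, y i ≤ x i := by
        have hne : (Finset.univ.filter (fun i => x i < y i)).Nonempty := by
          obtain ⟨j, hj⟩ := hle
          exact ⟨j, by simpa using hj⟩
        refine ⟨_, by simpa using Finset.min'_mem _ hne, fun i hi => ?_⟩
        by_contra h
        exact absurd (Finset.min'_le _ i (by simpa using h)) (not_le.2 hi)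
      obtain ⟨i, hij, hi⟩ : ∃ i < j, y i < x i := by
        by_contra! h
        have : ∑ i ∈ Finset.Iic j, x i < ∑ i ∈ Finset.Iic j, y i := by
          apply Finset.sum_lt_sum
          · intro i hi
            rcases (Finset.mem_Iic.1 hi).lt_or_eq with h' | rfl
            · exact h i h'
            · exact hj.le
          · exact ⟨j, by simp, hj⟩
        linarith [hpre j]
      set δ := min (x i - y i) (y j - x j) with hδ
      have hδ0 : 0 < δ := lt_min (by linarith) (by linarith)
      have hδ1 : δ ≤ x i - y i := min_le_left _ _
      have hδ2 : δ ≤ y j - x j := min_le_right _ _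
      have hne : i ≠ j := hij.ne
      let x' := Function.update (Function.update x i (x i - δ)) j (x j + δ)
      have xi : x' i = x i - δ := by simp [x', hne]
      have xj : x' j = x j + δ := by simp [x']
      have xo : ∀ r, r ≠ i → r ≠ j → x' r = x r := fun r h h' => by simp [x', h, h']
      have hyij := hya hij.le
      have h1 : HH S x ≤ HH S x' := by
        refine HH_transfer S hS hne xo ?_ (hx j) hx ?_ ?_
        · rw [xi, xj]; ring
        · rw [xi, xj]; linarith
        · rw [xi]; linarith
      refine h1.trans (ih x' ?_ ?_ ?_ ?_)
      · intro r
        by_cases h : r = i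
        · subst h; rw [xi]; linarith [hy r]
        by_cases h' : r = j
        · subst h'; rw [xj]; linarith [hx r]
        rw [xo r h h']; exact hx r
      · rw [← hsum]
        exact sum_pair hne xo (by rw [xi, xj]; ring) _ (Finset.mem_univ _) (Finset.mem_univ _)
      · intro s
        by_cases hs : j ≤ s
        · rw [sum_pair hne xo (by rw [xi, xj]; ring) (Finset.Iic s) (by simpa using hij.le.trans hs) (by simpa using hs)]
          exact hpre s
        · apply Finset.sum_le_sum
          intro r hr
          have hrj : r < j := (Finset.mem_Iic.1 hr).trans_lt (not_le.1 hs)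
          by_cases h : r = i
          · subst h; rw [xi]; linarith
          rw [xo r h hrj.ne]; exact hmin r hrj
      · have hlt : (Finset.univ.filter (fun i => x' i ≠ y i)).card < (Finset.univ.filter (fun i => x i ≠ y i)).card := by
          apply Finset.card_lt_card
          rw [Finset.ssubset_iff_of_subset]
          · rcases min_choice (x i - y i) (y j - x j) with h | h
            · refine ⟨i, by simpa using hi.ne', ?_⟩
              have : x' i = y i := by rw [xi, hδ, h]; ring
              simp [this]
            · refine ⟨j, by simpa using hj.ne, ?_⟩
              have : x' j = y j := by rw [xj, hδ, h]; ring
              simp [this]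
          · intro r hr
            rw [Finset.mem_filter] at hr ⊢
            refine ⟨hr.1, ?_⟩
            by_cases h : r = i
            · subst h; exact hi.ne'
            by_cases h' : r = j
            · subst h'; exact hj.ne
            rw [← xo r h h']; exact hr.2
        omega

lemma sort_exists {n : ℕ} (x : Fin n → ℝ) : ∃ σ : Equiv.Perm (Fin n), Antitone (x ∘ σ) := by
  refine ⟨Tuple.sort (fun i => - x i), fun a b hab => ?_⟩
  have := Tuple.monotone_sort (fun i => - x i) hab
  simp only [Function.comp] at this ⊢
  linarith

lemma sum_le_prefix {n : ℕ} {x : Fin n → ℝ} (hx : Antitone x) (j : Fin n) (A : Finset (Fin n))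
    (hA : A.card = (Finset.Iic j).card) : ∑ i ∈ A, x i ≤ ∑ i ∈ Finset.Iic j, x i := by
  have e1 := Finset.sum_inter_add_sum_sdiff A (Finset.Iic j) x
  have e2 := Finset.sum_inter_add_sum_sdiff (Finset.Iic j) A x
  rw [Finset.inter_comm] at e2
  have hc : (A \ Finset.Iic j).card = (Finset.Iic j \ A).card := Finset.card_sdiff_comm hA
  have h1 : ∑ i ∈ A \ Finset.Iic j, x i ≤ (A \ Finset.Iic j).card • x j :=
    Finset.sum_le_card_nsmul _ _ _ fun i hi => hx (by simp at hi; exact hi.2.le)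
  have h2 : (Finset.Iic j \ A).card • x j ≤ ∑ i ∈ Finset.Iic j \ A, x i :=
    Finset.card_nsmul_le_sum _ _ _ fun i hi => hx (by simp at hi; exact hi.1)
  rw [hc] at h1
  linarith

lemma bdd_sMax (n m : ℕ) (x : Fin n → ℝ) :
    BddAbove {s : ℝ | ∃ A : Finset (Fin n), A.card = m ∧ s = ∑ i ∈ A, x i} := by
  apply Set.Finite.bddAbove
  apply (Set.finite_range (fun A : Finset (Fin n) => ∑ i ∈ A, x i)).subset
  rintro s ⟨A, _, rfl⟩
  exact ⟨A, rfl⟩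

lemma final {n : ℕ} (S : Finset (Fin n → ℕ))
    (hS : ∀ p ∈ S, ∀ q, MajorizesNat n p q → q ∈ S) (x y : Fin n → ℝ) (hx : ∀ i, 0 ≤ x i)
    (hy : ∀ i, 0 ≤ y i) (hxy : Majorizes n x y) : HH S x ≤ HH S y := by
  obtain ⟨σ, hσ⟩ := sort_exists x
  obtain ⟨τ, hτ⟩ := sort_exists y
  rw [← HH_perm S hS x σ, ← HH_perm S hS y τ]
  have hsum : ∑ i, (x ∘ σ) i = ∑ i, (y ∘ τ) i := by
    have h1 := Equiv.sum_comp σ x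
    have h2 := Equiv.sum_comp τ y
    simp only [Function.comp]
    rw [h1, h2]; exact hxy.1
  refine chain S hS (fun i => hy _) hτ _ _ (fun i => hx _) hsum ?_ le_rfl
  intro j
  by_cases hj : (j : ℕ) + 1 = n
  · have : Finset.Iic j = Finset.univ := by
      ext i
      have hi := i.2
      simp only [Finset.mem_Iic, Finset.mem_univ, iff_true, Fin.le_def]; omega
    rw [this, hsum]; exact le_rfl
  · have hcard : (Finset.Iic j).card = (j:ℕ) + 1 := by simp
    have hm := hxy.2 (j+1) (by omega) (by omega)
    have h1 : ∑ i ∈ Finset.Iic j, (y ∘ τ) i ≤ sMax n (j+1) y :=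
      le_csSup (bdd_sMax _ _ _) ⟨(Finset.Iic j).map τ.toEmbedding, by simp, by simp⟩
    have h2 : sMax n (j+1) x ≤ ∑ i ∈ Finset.Iic j, (x ∘ σ) i := by
      apply csSup_le
      · exact ⟨_, Finset.Iic j, by simp, rfl⟩
      · rintro s ⟨A, hA, rfl⟩
        have := sum_le_prefix hσ j (A.map σ.symm.toEmbedding) (by rw [hcard, Finset.card_map, hA])
        simpa using this
    exact h1.trans (hm.trans h2)

theorem stmt9 (n k : ℕ) (hn : 1 ≤ n) (hk : 1 ≤ k) (S : Finset (Fin n → ℕ))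
    (hSk : ∀ p ∈ S, ∑ i, p i = k)
    (hSchur : ∀ p ∈ S, ∀ q : Fin n → ℕ, (∑ i, q i = k) → MajorizesNat n p q → q ∈ S)
    (x y : Fin n → ℝ) (hx : ∀ i, 0 ≤ x i) (hy : ∀ i, 0 ≤ y i)
    (hxy : Majorizes n x y) :
    ∑ p ∈ S, ∏ i, x i ^ p i / (Nat.factorial (p i))
      ≤ ∑ p ∈ S, ∏ i, y i ^ p i / (Nat.factorial (p i)) := by
  exact final S (fun p hp q hq => hSchur p hp q (hq.1 ▸ hSk p hp) hq) x y hx hy hxy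
end

section
/- Let n ≥ 1 and k, r ≥ 1 be integers. The polynomial F_{k,r} is Schur-concave on [0,∞)^n: whenever x, y ∈ [0,∞)^n and x majorizes y, one has F_{k,r}(x) ≤ F_{k,r}(y). -/
open Finset MeasureTheory

noncomputable def cc (r u : ℕ) (a : ℝ) : ℝ := if u ≤ r then a ^ u / (Nat.factorial u) else 0

noncomputable def PP (r : ℕ) (a : ℝ) : Polynomial ℝ :=
  ∑ l : Fin (r + 1), Polynomial.monomial (l : ℕ) (a ^ (l : ℕ) / (Nat.factorial (l : ℕ)))

lemma PP_coeff (r u : ℕ) (a : ℝ) : (PP r a).coeff u = cc r u a := by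
  unfold PP cc
  rw [Polynomial.finsetSum_coeff]
  simp only [Polynomial.coeff_monomial]
  split_ifs with h
  · rw [Finset.sum_eq_single (⟨u, by omega⟩ : Fin (r + 1))]
    · simp
    · intro b _ hb
      rw [if_neg]
      intro h'
      exact hb (Fin.ext h')
    · simp
  · apply Finset.sum_eq_zero
    intro b _
    rw [if_neg]
    have := b.2
    omega

lemma cc_nonneg (r u : ℕ) {a : ℝ} (ha : 0 ≤ a) : 0 ≤ cc r u a := by
  unfold cc
  split_ifs <;> positivity

lemma prod_monomial_aux {ι : Type*} (s : Finset ι) (e : ι → ℕ) (c : ι → ℝ) :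
    ∏ i ∈ s, Polynomial.monomial (e i) (c i) = Polynomial.monomial (∑ i ∈ s, e i) (∏ i ∈ s, c i) := by
  classical
  induction s using Finset.induction_on with
  | empty => simp
  | insert a s ha ih =>
    rw [Finset.prod_insert ha, Finset.sum_insert ha, Finset.prod_insert ha, ih,
      Polynomial.monomial_mul_monomial]

lemma F_eq (n r k : ℕ) (x : Fin n → ℝ) : F n r k x = (∏ i, PP r (x i)).coeff k := by
  unfold F PP
  rw [Finset.prod_univ_sum, Polynomial.finsetSum_coeff, Fintype.piFinset_univ, Finset.sum_filter]
  apply Finset.sum_congr rfl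
  intro κ _
  rw [prod_monomial_aux, Polynomial.coeff_monomial]

lemma F_perm (n r k : ℕ) (x : Fin n → ℝ) (σ : Equiv.Perm (Fin n)) :
    F n r k (x ∘ σ) = F n r k x := by
  rw [F_eq, F_eq]
  congr 1
  exact Equiv.prod_comp σ (fun i => PP r (x i))

lemma prod_coeff_nonneg {ι : Type*} (s : Finset ι) (p : ι → Polynomial ℝ)
    (h : ∀ i ∈ s, ∀ u, 0 ≤ (p i).coeff u) : ∀ u, 0 ≤ (∏ i ∈ s, p i).coeff u := by
  classical
  induction s using Finset.induction_on with
  | empty => intro u; simp [Polynomial.coeff_one]; split_ifs <;> norm_num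
  | insert a s ha ih =>
    intro u
    rw [Finset.prod_insert ha, Polynomial.coeff_mul]
    apply Finset.sum_nonneg
    intro q _
    exact mul_nonneg (h a (by simp) _) (ih (fun i hi => h i (by simp [hi])) _)

/-- derivative of `cc` -/
noncomputable def dd (r : ℕ) : ℕ → ℝ → ℝ
  | 0, _ => 0
  | u + 1, a => cc r u a - if u = r then cc r r a else 0

lemma cc_deriv (r u : ℕ) (a : ℝ) : HasDerivAt (cc r u) (dd r u a) a := by
  cases u with
  | zero =>
    have : cc r 0 = fun _ => (1 : ℝ) := by
      funext t; simp [cc]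
    rw [this]
    exact hasDerivAt_const a 1
  | succ u =>
    by_cases h : u + 1 ≤ r
    · have : cc r (u + 1) = fun t => t ^ (u + 1) / ((u + 1).factorial : ℝ) := by
        funext t; simp [cc, h]
      rw [this]
      have h2 := (hasDerivAt_pow (u + 1) a).div_const ((u + 1).factorial : ℝ)
      suffices e : dd r (u + 1) a =
          ((u + 1 : ℕ) : ℝ) * a ^ (u + 1 - 1) / ((u + 1).factorial : ℝ) by
        rw [e]
        exact h2
      have h3 : u ≠ r := by omega
      have h4 : u ≤ r := by omega
      simp only [dd, cc, h3, h4, if_true, if_false, Nat.factorial_succ,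
        Nat.add_sub_cancel]
      have : (u.factorial : ℝ) ≠ 0 := by positivity
      push_cast
      field_simp
      ring
    · have : cc r (u + 1) = fun _ => (0 : ℝ) := by
        funext t; simp [cc, h]
      rw [this]
      have h0 : dd r (u + 1) a = 0 := by
        by_cases h3 : u = r
        · simp [dd, h3]
        · have : ¬ u ≤ r := by omega
          simp [dd, cc, h3, this]
      rw [h0]
      exact hasDerivAt_const a 0

noncomputable def GG (r m : ℕ) (a b : ℝ) : ℝ :=
  ∑ p ∈ antidiagonal m, cc r p.1 a * cc r p.2 b

lemma cross (r v : ℕ) {a b : ℝ} (hb : 0 ≤ b) (hab : b ≤ a) :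
    cc r v a * cc r r b ≤ cc r r a * cc r v b := by
  unfold cc
  split_ifs with h h'
  · obtain ⟨d, rfl⟩ := Nat.exists_eq_add_of_le h
    have h1 : b ^ d ≤ a ^ d := pow_le_pow_left₀ hb hab d
    have ha := hb.trans hab
    have h2 : a ^ v * b ^ (v + d) ≤ a ^ (v + d) * b ^ v := by
      rw [pow_add, pow_add]
      have : 0 ≤ a ^ v * b ^ v := by positivity
      nlinarith
    rw [div_mul_div_comm, div_mul_div_comm, mul_comm (v.factorial : ℝ)]
    gcongr
  · omega
  all_goals simp

lemma dG_nonneg (r m : ℕ) {a b : ℝ} (hb : 0 ≤ b) (hab : b ≤ a) :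
    0 ≤ ∑ p ∈ antidiagonal m, (-(dd r p.1 a) * cc r p.2 b + cc r p.1 a * dd r p.2 b) := by
  rw [Finset.sum_add_distrib]
  cases m with
  | zero => simp [dd]
  | succ M =>
    rw [Finset.Nat.sum_antidiagonal_succ, Finset.Nat.sum_antidiagonal_succ']
    have e : ∑ p ∈ antidiagonal M, (if p.2 = r then cc r p.1 a * cc r r b else 0)
        = ∑ p ∈ antidiagonal M, (if p.1 = r then cc r p.2 a * cc r r b else 0) := by
      rw [← Finset.Nat.sum_antidiagonal_swap]
      rfl
    have e2 : (∑ p ∈ antidiagonal M, -(dd r (p.1 + 1) a) * cc r p.2 b) +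
        ∑ p ∈ antidiagonal M, cc r p.1 a * dd r (p.2 + 1) b =
        ∑ p ∈ antidiagonal M, (if p.1 = r then cc r r a * cc r p.2 b else 0) -
        ∑ p ∈ antidiagonal M, (if p.2 = r then cc r p.1 a * cc r r b else 0) := by
      rw [← Finset.sum_add_distrib, ← Finset.sum_sub_distrib]
      apply Finset.sum_congr rfl
      intro p _
      simp only [dd]
      split_ifs <;> ring
    have e3 : dd r 0 a = 0 := rfl
    have e4 : dd r 0 b = 0 := rfl
    simp only [e3, e4, neg_zero, zero_mul, mul_zero, zero_add, add_zero]
    rw [e2, e, ← Finset.sum_sub_distrib]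
    apply Finset.sum_nonneg
    intro p _
    split_ifs
    · have := cross r p.2 hb hab
      linarith
    · simp

lemma GG_mono (r m : ℕ) {a b δ : ℝ} (hb : 0 ≤ b) (hδ : 0 ≤ δ) (h : b + δ ≤ a - δ) :
    GG r m a b ≤ GG r m (a - δ) (b + δ) := by
  have hd : ∀ t : ℝ, HasDerivAt (fun t => GG r m (a - t) (b + t))
      (∑ p ∈ antidiagonal m,
        (-(dd r p.1 (a - t)) * cc r p.2 (b + t) + cc r p.1 (a - t) * dd r p.2 (b + t))) t := by
    intro t
    unfold GG
    apply HasDerivAt.fun_sum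
    intro p _
    have h1 : HasDerivAt (fun t => cc r p.1 (a - t)) (-(dd r p.1 (a - t))) t := by
      have := (cc_deriv r p.1 (a - t)).comp t ((hasDerivAt_id t).const_sub a)
      simpa [Function.comp_def] using this
    have h2 : HasDerivAt (fun t => cc r p.2 (b + t)) (dd r p.2 (b + t)) t := by
      have := (cc_deriv r p.2 (b + t)).comp t ((hasDerivAt_id t).const_add b)
      simpa [Function.comp_def] using this
    exact h1.mul h2
  have hm : MonotoneOn (fun t => GG r m (a - t) (b + t)) (Set.Icc 0 δ) := by
    apply monotoneOn_of_deriv_nonneg (convex_Icc 0 δ)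
    · exact fun t _ => (hd t).continuousAt.continuousWithinAt
    · exact fun t _ => (hd t).differentiableAt.differentiableWithinAt
    · intro t ht
      rw [interior_Icc] at ht
      rw [(hd t).deriv]
      exact dG_nonneg r m (by linarith [ht.1]) (by linarith [ht.2])
  have := hm (Set.left_mem_Icc.2 hδ) (Set.right_mem_Icc.2 hδ) hδ
  simpa using this

lemma F_transfer (n r k : ℕ) (x x' : Fin n → ℝ) (hx : ∀ i, 0 ≤ x i) (i j : Fin n) (hij : i ≠ j)
    (δ : ℝ) (hδ : 0 ≤ δ) (h : x j + δ ≤ x i - δ) (hi : x' i = x i - δ) (hj : x' j = x j + δ)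
    (ho : ∀ l, l ≠ i → l ≠ j → x' l = x l) : F n r k x ≤ F n r k x' := by
  have key : ∀ z : Fin n → ℝ, ∏ l, PP r (z l) =
      (PP r (z i) * PP r (z j)) * ∏ l ∈ (univ.erase i).erase j, PP r (z l) := by
    intro z
    rw [mul_assoc, Finset.mul_prod_erase _ (fun l => PP r (z l)) (by simp [hij.symm]),
      Finset.mul_prod_erase _ (fun l => PP r (z l)) (by simp)]
  have hrest : ∏ l ∈ (univ.erase i).erase j, PP r (x' l) =
      ∏ l ∈ (univ.erase i).erase j, PP r (x l) := by
    apply Finset.prod_congr rfl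
    intro l hl
    simp only [Finset.mem_erase] at hl
    rw [ho l hl.2.1 hl.1]
  rw [F_eq, F_eq, key x, key x', hrest, Polynomial.coeff_mul, Polynomial.coeff_mul]
  apply Finset.sum_le_sum
  intro p _
  apply mul_le_mul_of_nonneg_right
  · rw [Polynomial.coeff_mul, Polynomial.coeff_mul]
    simp only [PP_coeff]
    rw [hi, hj]
    exact GG_mono r p.1 (hx j) hδ h
  · apply prod_coeff_nonneg
    intro l _ u
    rw [PP_coeff]
    exact cc_nonneg r u (hx l)

lemma main_aux (n r k : ℕ) (y : Fin n → ℝ) (hy : ∀ i, 0 ≤ y i) (hanti : Antitone y) :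
    ∀ (N : ℕ) (x : Fin n → ℝ), (∀ i, 0 ≤ x i) → (∑ i, x i = ∑ i, y i) →
      (∀ j, ∑ l ∈ Iic j, y l ≤ ∑ l ∈ Iic j, x l) →
      (univ.filter (fun l => x l ≠ y l)).card ≤ N → F n r k x ≤ F n r k y := by
  intro N
  induction N with
  | zero =>
    intro x _ _ _ hc
    have : x = y := by
      funext l
      by_contra hl
      have : l ∈ univ.filter (fun l => x l ≠ y l) := by simp [hl]
      have := Finset.card_pos.2 ⟨l, this⟩
      omega
    rw [this]
  | succ N ih =>
    intro x hx hs hp hc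
    by_cases hex : ∃ j, x j < y j
    swap
    · push Not at hex
      have := (Finset.sum_eq_sum_iff_of_le (s := univ) (fun i _ => hex i)).1 hs.symm
      have : x = y := by
        funext l
        exact (this l (by simp)).symm
      rw [this]
    obtain ⟨j, hj, hmin⟩ : ∃ j, x j < y j ∧ ∀ l, l < j → y l ≤ x l := by
      have hne : (univ.filter (fun l => x l < y l)).Nonempty := by
        obtain ⟨j, hj⟩ := hex
        exact ⟨j, by simp [hj]⟩
      refine ⟨_, (Finset.mem_filter.1 (Finset.min'_mem _ hne)).2, ?_⟩
      intro l hl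
      by_contra hlt
      push Not at hlt
      exact absurd (Finset.min'_le _ l (by simp [hlt])) (not_le.2 hl)
    obtain ⟨i, hij, hi⟩ : ∃ i, i < j ∧ y i < x i := by
      by_contra hcon
      push Not at hcon
      have : ∑ l ∈ Iic j, x l < ∑ l ∈ Iic j, y l := by
        apply Finset.sum_lt_sum
        · intro l hl
          rcases (Finset.mem_Iic.1 hl).lt_or_eq with h | h
          · exact hcon l h
          · rw [h]; exact hj.le
        · exact ⟨j, by simp, hj⟩
      exact absurd (hp j) (not_le.2 this)
    set δ := min (x i - y i) (y j - x j) with hδ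
    have hδ1 : δ ≤ x i - y i := min_le_left _ _
    have hδ2 : δ ≤ y j - x j := min_le_right _ _
    have hδ0 : 0 < δ := lt_min (by linarith) (by linarith)
    have hyij := hanti hij.le
    set x' : Fin n → ℝ := fun l => x l - (if l = i then δ else 0) + (if l = j then δ else 0) with hx'
    have xi : x' i = x i - δ := by simp [hx', hij.ne]
    have xj : x' j = x j + δ := by simp [hx', hij.ne']
    have xo : ∀ l, l ≠ i → l ≠ j → x' l = x l := by
      intro l h1 h2; simp [hx', h1, h2]
    have hsum : ∀ s : Finset (Fin n), ∑ l ∈ s, x' l =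
        ∑ l ∈ s, x l - (if i ∈ s then δ else 0) + (if j ∈ s then δ else 0) := by
      intro s
      simp only [hx', Finset.sum_add_distrib, Finset.sum_sub_distrib, Finset.sum_ite_eq']
    refine (F_transfer n r k x x' hx i j hij.ne δ hδ0.le (by linarith) xi xj xo).trans
      (ih x' ?_ ?_ ?_ ?_)
    · intro l
      by_cases h1 : l = i
      · rw [h1, xi]; linarith [hy i]
      · by_cases h2 : l = j
        · rw [h2, xj]; linarith [hx j]
        · rw [xo l h1 h2]; exact hx l
    · rw [hsum]; simp [hs]
    · intro m
      rw [hsum]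
      simp only [Finset.mem_Iic]
      have hm := hp m
      by_cases h1 : j ≤ m
      · have h2 : i ≤ m := hij.le.trans h1
        simp only [h1, h2, if_true]; linarith
      · by_cases h2 : i ≤ m
        · simp only [h1, h2, if_true, if_false]
          have := Finset.single_le_sum (f := fun l => x l - y l) (s := Iic m) (fun l hl => by
            have := hmin l ((Finset.mem_Iic.1 hl).trans_lt (not_le.1 h1))
            linarith) (Finset.mem_Iic.2 h2)
          rw [Finset.sum_sub_distrib] at this
          linarith
        · simp only [h1, h2, if_false]; linarith
    · have : univ.filter (fun l => x' l ≠ y l) ⊂ univ.filter (fun l => x l ≠ y l) := by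
        rw [Finset.ssubset_iff_of_subset]
        · rcases min_choice (x i - y i) (y j - x j) with h | h
          · exact ⟨i, by simp [hi.ne'], by simp [xi, hδ, h]⟩
          · exact ⟨j, by simp [hj.ne], by simp [xj, hδ, h]⟩
        · intro l hl
          simp only [Finset.mem_filter, Finset.mem_univ, true_and] at hl ⊢
          by_cases h1 : l = i
          · rw [h1]; exact hi.ne'
          · by_cases h2 : l = j
            · rw [h2]; exact hj.ne
            · rwa [xo l h1 h2] at hl
      have := Finset.card_lt_card this
      omega

lemma exists_sort (n : ℕ) (x : Fin n → ℝ) : ∃ σ : Equiv.Perm (Fin n), Antitone (x ∘ σ) := by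
  refine ⟨Tuple.sort (fun i => - x i), ?_⟩
  intro a b hab
  have := Tuple.monotone_sort (fun i => - x i) hab
  simpa using this

lemma sum_le_Iic (n : ℕ) (x : Fin n → ℝ) (hx : Antitone x) (j : Fin n) (A : Finset (Fin n))
    (hA : A.card = j + 1) : ∑ l ∈ A, x l ≤ ∑ l ∈ Iic j, x l := by
  have h1 : ∑ l ∈ A, (x l - x j) ≤ ∑ l ∈ Iic j, (x l - x j) := by
    have e1 : ∑ l ∈ A, (x l - x j) ≤ ∑ l ∈ A ∩ Iic j, (x l - x j) := by
      rw [← Finset.sum_inter_add_sum_sdiff A (Iic j)]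
      have : ∑ l ∈ A \ Iic j, (x l - x j) ≤ 0 := by
        apply Finset.sum_nonpos
        intro l hl
        simp only [Finset.mem_sdiff, Finset.mem_Iic, not_le] at hl
        linarith [hx hl.2.le]
      linarith
    refine e1.trans (Finset.sum_le_sum_of_subset_of_nonneg Finset.inter_subset_right ?_)
    intro l hl _
    linarith [hx (Finset.mem_Iic.1 hl)]
  rw [Finset.sum_sub_distrib, Finset.sum_sub_distrib] at h1
  simp only [Finset.sum_const, Fin.card_Iic, hA] at h1
  linarith

theorem stmt10 (n k r : ℕ) (hn : 1 ≤ n) (hk : 1 ≤ k) (hr : 1 ≤ r)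
    (x y : Fin n → ℝ) (hx : ∀ i, 0 ≤ x i) (hy : ∀ i, 0 ≤ y i)
    (hxy : Majorizes n x y) :
    F n r k x ≤ F n r k y := by
  obtain ⟨σ, hσ⟩ := exists_sort n x
  obtain ⟨τ, hτ⟩ := exists_sort n y
  rw [← F_perm n r k x σ, ← F_perm n r k y τ]
  have hs : ∑ i, (x ∘ σ) i = ∑ i, (y ∘ τ) i := by
    have h1 := Equiv.sum_comp σ x
    have h2 := Equiv.sum_comp τ y
    simp only [Function.comp]
    rw [h1, h2, hxy.1]
  refine main_aux n r k (y ∘ τ) (fun i => hy _) hτ _ (x ∘ σ) (fun i => hx _) hs ?_ le_rfl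
  intro j
  by_cases hj : (j : ℕ) + 1 ≤ n - 1
  · have h1 := hxy.2 (j + 1) (by omega) hj
    have h2 : ∑ l ∈ Iic j, (y ∘ τ) l ≤ sMax n (j + 1) y := by
      apply le_csSup
      · apply Set.Finite.bddAbove
        apply (Set.finite_range (fun A : Finset (Fin n) => ∑ i ∈ A, y i)).subset
        rintro s ⟨A, _, rfl⟩
        exact ⟨A, rfl⟩
      · exact ⟨(Iic j).map τ.toEmbedding, by simp, by simp⟩
    have h3 : sMax n (j + 1) x ≤ ∑ l ∈ Iic j, (x ∘ σ) l := by
      apply csSup_le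
      · exact ⟨_, Iic j, by simp, rfl⟩
      · rintro s ⟨A, hA, rfl⟩
        have := sum_le_Iic n (x ∘ σ) hσ j (A.map σ.symm.toEmbedding) (by simp [hA])
        simpa using this
    linarith
  · have : Iic j = univ := by
      ext l
      simp only [Finset.mem_Iic, Finset.mem_univ, iff_true]
      have := l.2
      rw [Fin.le_def]
      omega
    rw [this, hs]
end

section
/- Let n ≥ 1 and k, r ≥ 1 be integers. The polynomial M_{k,r} is Schur-convex on [0,∞)^n: whenever x, y ∈ [0,∞)^n and x majorizes y, one has M_{k,r}(x) ≥ M_{k,r}(y). -/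
open Finset MeasureTheory

/-- `M n k r x = ∑_{1 ≤ i₁ < ⋯ < i_r ≤ n} (x_{i₁} + ⋯ + x_{i_r})^k`. -/
noncomputable def M (n k r : ℕ) (x : Fin n → ℝ) : ℝ :=
  ∑ A ∈ Finset.powersetCard r (Finset.univ : Finset (Fin n)), (∑ i ∈ A, x i) ^ k

theorem aux_abel (d w : ℕ → ℝ) (n : ℕ) (hd : ∀ i, i < n → d (i+1) ≤ d i)
    (hw : ∀ m, m ≤ n → 0 ≤ ∑ i ∈ range m, w i) :
    d n * ∑ i ∈ range (n+1), w i ≤ ∑ i ∈ range (n+1), d i * w i := by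
  induction n with
  | zero => simp
  | succ n ih =>
    have h1 := ih (fun i hi => hd i (by omega)) (fun m hm => hw m (by omega))
    have h2 := hw (n+1) le_rfl
    have h3 := hd n (by omega)
    rw [Finset.sum_range_succ _ (n+1), Finset.sum_range_succ _ (n+1)]
    nlinarith [mul_nonneg (sub_nonneg.2 h3) h2]

theorem aux_card (n m : ℕ) (hm : m ≤ n) :
    (univ.filter (fun i : Fin n => i.val < m)).card = m := by
  rw [Fin.card_filter_val_lt]
  omega

theorem aux_top (n m : ℕ) (hm1 : 1 ≤ m) (hm : m ≤ n) (u : Fin n → ℝ) (hu : Antitone u)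
    (A : Finset (Fin n)) (hA : A.card = m) :
    ∑ i ∈ A, u i ≤ ∑ i ∈ univ.filter (fun i : Fin n => i.val < m), u i := by
  set B := univ.filter (fun i : Fin n => i.val < m) with hB
  have hBc : B.card = m := aux_card n m hm
  set t := u ⟨m-1, by omega⟩ with ht
  have key : ∑ i ∈ A, (u i - t) ≤ ∑ i ∈ B, (u i - t) := by
    have e : ∀ S : Finset (Fin n), ∑ i ∈ S, (u i - t) = ∑ i, if i ∈ S then (u i - t) else 0 := by
      intro S; simp
    rw [e A, e B]
    apply Finset.sum_le_sum
    intro i _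
    by_cases hi : i.val < m
    · have : t ≤ u i := hu (by rw [Fin.le_def]; simp; omega)
      have hiB : i ∈ B := by simp [hB, hi]
      rw [if_pos hiB]
      split_ifs <;> linarith
    · have : u i ≤ t := hu (by rw [Fin.le_def]; simp; omega)
      have hiB : i ∉ B := by simp [hB]; omega
      rw [if_neg hiB]
      split_ifs <;> linarith
  rw [Finset.sum_sub_distrib, Finset.sum_sub_distrib] at key
  simp only [Finset.sum_const, hA, hBc] at key
  linarith

theorem aux_smax_ge (n m : ℕ) (y : Fin n → ℝ) (A : Finset (Fin n)) (hA : A.card = m) :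
    ∑ i ∈ A, y i ≤ sMax n m y := by
  refine le_csSup ?_ (show _ ∈ {s : ℝ | ∃ A : Finset (Fin n), A.card = m ∧ s = ∑ i ∈ A, y i} from ⟨A, hA, rfl⟩)
  apply Set.Finite.bddAbove
  apply (Set.finite_range (fun A : Finset (Fin n) => ∑ i ∈ A, y i)).subset
  rintro s ⟨A, _, rfl⟩
  exact ⟨A, rfl⟩

theorem aux_sort (n : ℕ) (c : Fin n → ℝ) : ∃ τ : Equiv.Perm (Fin n), Antitone (c ∘ τ) := by
  refine ⟨Tuple.sort (fun i => - c i), fun i j h => ?_⟩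
  have := Tuple.monotone_sort (fun i => - c i) h
  simp only [Function.comp] at this ⊢
  linarith

theorem aux_partial (n m : ℕ) (hm : m ≤ n) (f : Fin n → ℝ) :
    ∑ i ∈ range m, (if h : i < n then f ⟨i, h⟩ else 0)
      = ∑ i ∈ univ.filter (fun i : Fin n => i.val < m), f i := by
  symm
  refine Finset.sum_bij (fun i _ => i.val) ?_ ?_ ?_ ?_
  · intro a ha; simpa using ha
  · intro a _ b _ h; exact Fin.ext h
  · intro b hb
    have : b < m := by simpa using hb
    exact ⟨⟨b, by omega⟩, by simpa using this, rfl⟩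
  · intro a _; simp

theorem aux_rearr (n : ℕ) (hn : 1 ≤ n) (x y c : Fin n → ℝ) (hxy : Majorizes n x y) :
    ∃ σ : Equiv.Perm (Fin n), ∑ i, c i * y i ≤ ∑ i, c i * x (σ i) := by
  obtain ⟨τ, hτ⟩ := aux_sort n c
  obtain ⟨ρ, hρ⟩ := aux_sort n x
  refine ⟨τ.symm.trans ρ, ?_⟩
  rw [← Equiv.sum_comp τ (fun i => c i * y i), ← Equiv.sum_comp τ (fun i => c i * x _)]
  simp only [Equiv.trans_apply, Equiv.symm_apply_apply]
  have tot : ∑ i, (x (ρ i) - y (τ i)) = 0 := by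
    rw [Finset.sum_sub_distrib, Equiv.sum_comp ρ x, Equiv.sum_comp τ y, hxy.1, sub_self]
  obtain ⟨N, rfl⟩ : ∃ N, n = N + 1 := ⟨n-1, by omega⟩
  have hab := aux_abel (fun i => if h : i < N+1 then c (τ ⟨i, h⟩) else 0)
    (fun i => if h : i < N+1 then (x (ρ ⟨i, h⟩) - y (τ ⟨i, h⟩)) else 0) N ?_ ?_
  · have e1 := aux_partial (N+1) (N+1) le_rfl (fun i => x (ρ i) - y (τ i))
    have e2 := aux_partial (N+1) (N+1) le_rfl (fun i => c (τ i) * (x (ρ i) - y (τ i)))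
    have hu : univ.filter (fun i : Fin (N+1) => i.val < N+1) = univ := by
      ext i; simp; omega
    rw [hu] at e1 e2
    rw [e1, tot, mul_zero] at hab
    have e3 : ∑ i ∈ range (N+1), (if h : i < N+1 then c (τ ⟨i, h⟩) else 0) *
        (if h : i < N+1 then (x (ρ ⟨i, h⟩) - y (τ ⟨i, h⟩)) else 0) =
        ∑ i, c (τ i) * (x (ρ i) - y (τ i)) := by
      rw [← e2]
      apply Finset.sum_congr rfl
      intro i _
      split_ifs <;> simp
    rw [e3] at hab
    simp only [mul_sub, Finset.sum_sub_distrib] at hab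
    linarith
  · intro i hi
    simp only [show i < N+1 by omega, show i + 1 < N+1 by omega, dif_pos]
    exact hτ (by rw [Fin.le_def]; simp)
  · intro m hm
    rw [aux_partial (N+1) m (by omega) (fun i => x (ρ i) - y (τ i)), Finset.sum_sub_distrib]
    rcases Nat.eq_zero_or_pos m with rfl | hm0
    · simp
    set B := univ.filter (fun i : Fin (N+1) => i.val < m) with hB
    have hBc : B.card = m := aux_card (N+1) m (by omega)
    have h1 : ∑ i ∈ B, y (τ i) ≤ sMax (N+1) m y := by
      have := aux_smax_ge (N+1) m y (B.map τ.toEmbedding) (by simpa using hBc)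
      simpa using this
    have h2 := hxy.2 m hm0 (by omega)
    have h3 : sMax (N+1) m x ≤ ∑ i ∈ B, x (ρ i) := by
      apply csSup_le
      · exact ⟨_, B, hBc, rfl⟩
      · rintro s ⟨A, hA, rfl⟩
        have := aux_top (N+1) m hm0 (by omega) (x ∘ ρ) hρ (A.map ρ.symm.toEmbedding)
          (by simpa using hA)
        simpa using this
    linarith

theorem aux_bern (a b : ℝ) (ha : 0 ≤ a) (hb : 0 ≤ b) (k : ℕ) :
    b ^ (k+1) + (k+1) * b ^ k * (a - b) ≤ a ^ (k+1) := by
  induction k with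
  | zero => simp
  | succ k ih =>
    have h := mul_le_mul_of_nonneg_left ih ha
    have h2 : 0 ≤ (k+1) * b ^ k * (a-b)^2 := by positivity
    push_cast
    have e : a * (b ^ (k+1) + (k+1) * b ^ k * (a - b)) =
      b ^ (k+1+1) + (k+1+1) * b ^ (k+1) * (a - b) + (k+1) * b ^ k * (a-b)^2 := by ring
    have e2 : a ^ (k+1+1) = a * a^(k+1) := by ring
    linarith

theorem aux_symm (n k r : ℕ) (x : Fin n → ℝ) (σ : Equiv.Perm (Fin n)) :
    M n k r (fun i => x (σ i)) = M n k r x := by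
  unfold M
  refine Finset.sum_bij (fun A _ => A.map σ.toEmbedding) ?_ ?_ ?_ ?_
  · intro A hA; simpa [Finset.mem_powersetCard] using hA
  · intro A _ B _ h; exact Finset.map_injective _ h
  · intro B hB
    refine ⟨B.map σ.symm.toEmbedding, by simpa [Finset.mem_powersetCard] using hB, ?_⟩
    ext i; simp
  · intro A _; simp

theorem stmt12 (n k r : ℕ) (hn : 1 ≤ n) (hk : 1 ≤ k) (hr : 1 ≤ r)
    (x y : Fin n → ℝ) (hx : ∀ i, 0 ≤ x i) (hy : ∀ i, 0 ≤ y i)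
    (hxy : Majorizes n x y) :
    M n k r y ≤ M n k r x := by
  obtain ⟨k, rfl⟩ : ∃ K, k = K + 1 := ⟨k-1, by omega⟩
  set P := Finset.powersetCard r (Finset.univ : Finset (Fin n)) with hP
  let g : Finset (Fin n) → ℝ := fun A => (k+1) * (∑ i ∈ A, y i) ^ k
  obtain ⟨σ, hσ⟩ := aux_rearr n hn x y (fun i => ∑ A ∈ P, if i ∈ A then g A else 0) hxy
  have lin : ∀ z : Fin n → ℝ, ∑ i, (∑ A ∈ P, if i ∈ A then g A else 0) * z i =
      ∑ A ∈ P, g A * ∑ i ∈ A, z i := by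
    intro z
    simp only [Finset.sum_mul]
    rw [Finset.sum_comm]
    apply Finset.sum_congr rfl
    intro A _
    simp [Finset.mul_sum, ite_mul]
  rw [lin y, lin (fun i => x (σ i))] at hσ
  rw [← aux_symm n (k+1) r x σ]
  have h : ∑ A ∈ P, ((∑ i ∈ A, y i) ^ (k+1) + g A * (∑ i ∈ A, x (σ i) - ∑ i ∈ A, y i)) ≤
      ∑ A ∈ P, (∑ i ∈ A, x (σ i)) ^ (k+1) :=
    Finset.sum_le_sum fun A _ => aux_bern _ _ (Finset.sum_nonneg fun i _ => hx _)
      (Finset.sum_nonneg fun i _ => hy _) k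
  simp only [mul_sub, Finset.sum_add_distrib, Finset.sum_sub_distrib] at h
  unfold M
  linarith
end

section
/- Let n ≥ 1 and let x, y ∈ [0,∞)^n with ∑_{i=1}^n x_i = ∑_{i=1}^n y_i. If M_{k,r}(x) ≥ M_{k,r}(y) for all integers k, r ≥ 1, then x majorizes y. -/
open Finset MeasureTheory

theorem stmt14 (n : ℕ) (hn : 1 ≤ n) (x y : Fin n → ℝ)
    (hx : ∀ i, 0 ≤ x i) (hy : ∀ i, 0 ≤ y i)
    (hsum : ∑ i, x i = ∑ i, y i)
    (hM : ∀ k r : ℕ, 1 ≤ k → 1 ≤ r → M n k r y ≤ M n k r x) :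
    Majorizes n x y := by
  classical
  refine ⟨hsum, ?_⟩
  intro m hm1 hmn
  have hfin : ∀ z : Fin n → ℝ,
      {s : ℝ | ∃ A : Finset (Fin n), A.card = m ∧ s = ∑ i ∈ A, z i}.Finite := by
    intro z
    refine (Set.finite_range (fun A : Finset (Fin n) => ∑ i ∈ A, z i)).subset ?_
    rintro s ⟨A, -, rfl⟩
    exact ⟨A, rfl⟩
  obtain ⟨A0, -, hA0⟩ := Finset.exists_subset_card_eq
    (s := (Finset.univ : Finset (Fin n))) (n := m) (by simp; omega)
  have hle : ∀ (z : Fin n → ℝ) (A : Finset (Fin n)), A.card = m → ∑ i ∈ A, z i ≤ sMax n m z :=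
    fun z A hA => le_csSup (hfin z).bddAbove ⟨A, hA, rfl⟩
  by_contra hlt
  push Not at hlt
  have hs0 : 0 ≤ sMax n m x :=
    (Finset.sum_nonneg (fun i _ => hx i)).trans (hle x A0 hA0)
  have hmem : sMax n m y ∈ {s : ℝ | ∃ A : Finset (Fin n), A.card = m ∧ s = ∑ i ∈ A, y i} :=
    Set.Nonempty.csSup_mem ⟨_, A0, hA0, rfl⟩ (hfin y)
  obtain ⟨B, hB, hBt⟩ := hmem
  generalize hs : sMax n m x = s at *
  generalize ht : sMax n m y = t at *
  have htpos : 0 < t := hs0.trans_lt hlt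
  have key : ∀ k : ℕ, 1 ≤ k → t ^ k ≤ (n.choose m : ℝ) * s ^ k := by
    intro k hk
    have h1 : t ^ k ≤ M n k m y := by
      rw [hBt]
      unfold M
      exact Finset.single_le_sum (f := fun A : Finset (Fin n) => (∑ i ∈ A, y i) ^ k)
        (fun A _ => pow_nonneg (Finset.sum_nonneg (fun i _ => hy i)) k)
        (by simp [Finset.mem_powersetCard, hB])
    have h2 : M n k m x ≤ (n.choose m : ℝ) * s ^ k := by
      unfold M
      have := Finset.sum_le_card_nsmul (Finset.powersetCard m (Finset.univ : Finset (Fin n)))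
        (fun A => (∑ i ∈ A, x i) ^ k) (s ^ k) (fun A hA => by
          have hA' := (Finset.mem_powersetCard.1 hA).2
          have := hle x A hA'
          rw [hs] at this
          exact pow_le_pow_left₀ (Finset.sum_nonneg (fun i _ => hx i)) this k)
      simpa using this
    exact h1.trans ((hM k m hk hm1).trans h2)
  set C : ℝ := (n.choose m : ℝ) with hC
  have hC0 : 0 ≤ C := by positivity
  obtain ⟨k, hk⟩ := exists_pow_lt_of_lt_one (show (0 : ℝ) < 1 / (C + 1) by positivity)
    ((div_lt_one htpos).2 hlt)
  have hq0 : 0 ≤ s / t := by positivity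
  have hk' : (s / t) ^ (k + 1) < 1 / (C + 1) :=
    (pow_le_pow_of_le_one hq0 ((div_lt_one htpos).2 hlt).le (Nat.le_succ k)).trans_lt hk
  have hkey := key (k + 1) (by omega)
  have htk : 0 < t ^ (k + 1) := by positivity
  rw [div_pow, div_lt_div_iff₀ htk (by positivity)] at hk'
  have : 0 ≤ s ^ (k + 1) := by positivity
  nlinarith
end

section
/- Let n ≥ 1 and let x, y ∈ [0,∞)^n with ∑_{i=1}^n x_i = ∑_{i=1}^n y_i. If G_{k,r}(x) ≤ G_{k,r}(y) for all integers k, r ≥ 1, then M_{k,r}(x) ≥ M_{k,r}(y) for all integers k, r ≥ 1. -/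
open Finset MeasureTheory

/-- `G n k r x`: the sum over all n-tuples p of nonnegative integers with `∑ i, p i = k`
and at least `r` nonzero entries, of `∏ i, x i ^ p i / (p i)!`. -/
noncomputable def G (n k r : ℕ) (x : Fin n → ℝ) : ℝ :=
  ∑ κ ∈ Finset.univ.filter (fun κ : Fin n → Fin (k + 1) =>
      (∑ i, (κ i : ℕ)) = k ∧ r ≤ (Finset.univ.filter fun i => (κ i : ℕ) ≠ 0).card),
    ∏ i, x i ^ (κ i : ℕ) / (Nat.factorial (κ i : ℕ))

lemma aux_pow (n k : ℕ) (z : Fin n → ℝ) :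
    (∑ i, z i) ^ k = (k.factorial : ℝ) * ∑ κ ∈ Finset.univ.filter
      (fun κ : Fin n → Fin (k + 1) => (∑ i, (κ i : ℕ)) = k),
      ∏ i, z i ^ (κ i : ℕ) / (Nat.factorial (κ i : ℕ)) := by
  rw [Finset.sum_pow_eq_sum_piAntidiag, Finset.mul_sum]
  symm
  refine Finset.sum_bij (fun κ _ => fun i => (κ i : ℕ)) ?_ ?_ ?_ ?_
  · intro κ hκ
    simpa using hκ
  · intro a _ b _ h
    funext i
    exact Fin.ext (congrFun h i)
  · intro p hp
    simp only [Finset.mem_piAntidiag] at hp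
    have hle : ∀ i, p i < k + 1 := fun i => by
      have := Finset.single_le_sum (f := p) (fun j _ => Nat.zero_le _) (Finset.mem_univ i)
      have h1 : ∑ j, p j = k := hp.1
      omega
    exact ⟨fun i => ⟨p i, hle i⟩, by simpa using hp.1, rfl⟩
  · intro κ hκ
    simp only [Finset.mem_filter, Finset.mem_univ, true_and] at hκ
    have h := Nat.multinomial_spec (Finset.univ) (fun i => (κ i : ℕ))
    rw [hκ] at h
    rw [← h, Finset.prod_div_distrib]
    push_cast
    have hne : (∏ i, ((κ i : ℕ).factorial : ℝ)) ≠ 0 :=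
      Finset.prod_ne_zero_iff.2 fun i _ => by positivity
    field_simp

lemma aux_card_s15 (n r : ℕ) (hr : r ≤ n) (S : Finset (Fin n)) :
    ((Finset.powersetCard r (Finset.univ : Finset (Fin n))).filter (fun A => S ⊆ A)).card
      = (n - S.card).choose (n - r) := by
  have : (n - S.card).choose (n - r) = (Finset.powersetCard (n - r) Sᶜ).card := by
    rw [Finset.card_powersetCard, Finset.card_compl, Fintype.card_fin]
  rw [this]
  refine Finset.card_bij' (fun A _ => Aᶜ) (fun A _ => Aᶜ) ?_ ?_ ?_ ?_
  · intro A hA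
    simp only [Finset.mem_filter, Finset.mem_powersetCard] at hA ⊢
    refine ⟨Finset.compl_subset_compl.2 hA.2, ?_⟩
    rw [Finset.card_compl, Fintype.card_fin, hA.1.2]
  · intro A hA
    simp only [Finset.mem_filter, Finset.mem_powersetCard] at hA ⊢
    refine ⟨⟨Finset.subset_univ _, ?_⟩, ?_⟩
    · rw [Finset.card_compl, Fintype.card_fin, hA.2]; omega
    · exact Finset.subset_compl_comm.1 hA.1
  · intro A _; simp
  · intro A _; simp

lemma aux_abel_s15 (c : ℕ → ℝ) (n d : ℕ) (hd : d ≤ n) :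
    c d = c 0 - ∑ j ∈ Finset.range n, (if j + 1 ≤ d then (c j - c (j + 1)) else 0) := by
  rw [← Finset.sum_filter]
  have : (Finset.range n).filter (fun j => j + 1 ≤ d) = Finset.range d := by
    ext j; simp only [Finset.mem_filter, Finset.mem_range]; omega
  rw [this, Finset.sum_range_sub']
  ring

lemma aux_M (n k r : ℕ) (hr : r ≤ n) (x : Fin n → ℝ) :
    M n k r x = (k.factorial : ℝ) * ∑ κ ∈ Finset.univ.filter
      (fun κ : Fin n → Fin (k + 1) => (∑ i, (κ i : ℕ)) = k),
      (((n - (Finset.univ.filter fun i => (κ i : ℕ) ≠ 0).card).choose (n - r) : ℕ) : ℝ) *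
      ∏ i, x i ^ (κ i : ℕ) / (Nat.factorial (κ i : ℕ)) := by
  unfold M
  have h1 : ∀ A ∈ Finset.powersetCard r (Finset.univ : Finset (Fin n)), (∑ i ∈ A, x i) ^ k =
      (k.factorial : ℝ) * ∑ κ ∈ Finset.univ.filter
      (fun κ : Fin n → Fin (k + 1) => (∑ i, (κ i : ℕ)) = k),
      if (Finset.univ.filter fun i => (κ i : ℕ) ≠ 0) ⊆ A then
        ∏ i, x i ^ (κ i : ℕ) / (Nat.factorial (κ i : ℕ)) else 0 := by
    intro A _
    have : ∑ i ∈ A, x i = ∑ i, if i ∈ A then x i else 0 := by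
      rw [← Finset.sum_filter]; simp
    rw [this, aux_pow]
    congr 1
    refine Finset.sum_congr rfl fun κ _ => ?_
    split_ifs with h
    · refine Finset.prod_congr rfl fun i _ => ?_
      split_ifs with hi
      · rfl
      · have : (κ i : ℕ) = 0 := by
          by_contra h0
          exact hi (h (by simpa using h0))
        simp [this]
    · obtain ⟨i, hi, hiA⟩ := Finset.not_subset.1 h
      simp only [Finset.mem_filter, Finset.mem_univ, true_and] at hi
      refine Finset.prod_eq_zero (Finset.mem_univ i) ?_
      rw [if_neg hiA, zero_pow hi, zero_div]
  rw [Finset.sum_congr rfl h1, ← Finset.mul_sum, Finset.sum_comm]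
  congr 1
  refine Finset.sum_congr rfl fun κ _ => ?_
  rw [← Finset.sum_filter, Finset.sum_const, aux_card_s15 n r hr, nsmul_eq_mul]

lemma aux_MG (n k r : ℕ) (hr : r ≤ n) (x : Fin n → ℝ) :
    M n k r x = ((n.choose (n - r) : ℕ) : ℝ) * (∑ i, x i) ^ k -
      (k.factorial : ℝ) * ∑ j ∈ Finset.range n,
        ((((n - j).choose (n - r) : ℕ) : ℝ) - (((n - (j + 1)).choose (n - r) : ℕ) : ℝ)) *
          G n k (j + 1) x := by
  rw [aux_M n k r hr, aux_pow, mul_left_comm, ← mul_sub]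
  congr 1
  have hG : ∀ j, G n k (j + 1) x = ∑ κ ∈ Finset.univ.filter
      (fun κ : Fin n → Fin (k + 1) => (∑ i, (κ i : ℕ)) = k),
      if j + 1 ≤ (Finset.univ.filter fun i => (κ i : ℕ) ≠ 0).card then
        ∏ i, x i ^ (κ i : ℕ) / (Nat.factorial (κ i : ℕ)) else 0 := by
    intro j
    unfold G
    rw [← Finset.sum_filter, Finset.filter_filter]
  simp only [hG, Finset.mul_sum]
  rw [Finset.sum_comm, ← Finset.sum_sub_distrib]
  refine Finset.sum_congr rfl fun κ _ => ?_
  have hd : (Finset.univ.filter fun i => (κ i : ℕ) ≠ 0).card ≤ n := by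
    simpa using Finset.card_le_univ (Finset.univ.filter fun i => (κ i : ℕ) ≠ 0)
  rw [aux_abel_s15 (fun d => (((n - d).choose (n - r) : ℕ) : ℝ)) n _ hd, sub_mul, Finset.sum_mul]
  simp only [ite_mul, mul_ite, zero_mul, mul_zero, Nat.sub_zero]

theorem stmt15 (n : ℕ) (hn : 1 ≤ n) (x y : Fin n → ℝ)
    (hx : ∀ i, 0 ≤ x i) (hy : ∀ i, 0 ≤ y i)
    (hsum : ∑ i, x i = ∑ i, y i)
    (hG : ∀ k r : ℕ, 1 ≤ k → 1 ≤ r → G n k r x ≤ G n k r y) :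
    ∀ k r : ℕ, 1 ≤ k → 1 ≤ r → M n k r y ≤ M n k r x := by
  intro k r hk _
  by_cases hr : r ≤ n
  · rw [aux_MG n k r hr x, aux_MG n k r hr y, hsum]
    refine sub_le_sub_left (mul_le_mul_of_nonneg_left (Finset.sum_le_sum fun j _ => ?_)
      (by positivity)) _
    refine mul_le_mul_of_nonneg_left (hG k (j + 1) hk (by omega)) ?_
    rw [sub_nonneg]
    exact_mod_cast Nat.choose_le_choose (n - r) (by omega)
  · have : Finset.powersetCard r (Finset.univ : Finset (Fin n)) = ∅ :=
      Finset.powersetCard_eq_empty.2 (by simpa using hr)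
    simp [M, this]
end
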